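/- arXiv:2107.07433 — 5 statements merged into one kernel-verified Lean document; each statement's English description precedes it below -/
import Mathlib

section
/- Let (k_n)_{n∈ℕ} be a strictly increasing sequence of natural numbers with k_0 = 0 and lim_{n→∞} (k_{n+1} − k_n)/k_{n+1} = 1, and define f : 𝒫(ℕ) → 𝒫(ℕ) by f(A) = ⋃_{n∈A} [k_n, k_{n+1}). Then f induces a regular embedding of 𝒫(ℕ)/fin into 𝒫(ℕ)/Δ_d; concretely: (i) f(A ∪ B) = f(A) ∪ f(B), f(A ∩ B) = f(A) ∩ f(B), and f(ℕ∖A) = ℕ∖f(A) for all A, B ⊆ ℕ; (ii) if A Δ B is finite then d(f(A) Δ f(B)) = 0; (iii) if A is infinite then d*(f(A)) = 1 (in particular f(A) does not have density zero); (iv) if 𝒜 is a family of infinite subsets of ℕ with pairwise finite intersections such that every infinite B ⊆ ℕ has infinite intersection with some member of 𝒜, then for every C ⊆ ℕ with d*(C) > 0 there exists A ∈ 𝒜 with d*(C ∩ f(A)) > 0. -/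
open Filter Topology MeasureTheory
open scoped symmDiff

/-- Upper asymptotic density: `d*(A) = limsup |A ∩ {0,…,n−1}|/n`. -/
noncomputable def upperDensity (A : Set ℕ) : ℝ :=
  Filter.limsup (fun n : ℕ => ((A ∩ Set.Iio n).ncard : ℝ) / n) Filter.atTop

/-- `A` has asymptotic density `α`: `lim |A ∩ {0,…,n−1}|/n = α`. -/
def HasDensity (A : Set ℕ) (α : ℝ) : Prop :=
  Filter.Tendsto (fun n : ℕ => ((A ∩ Set.Iio n).ncard : ℝ) / n) Filter.atTop (nhds α)

/-!
Since `k n / k (n + 1) → 0`, the block `[k n, k (n + 1))` fills almost all of `[0, k (n + 1))`, so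
the union of infinitely many blocks has upper density one. For regularity, suppose that, for
arbitrarily large `n`, `C` has noticeably more than `2 * c * n` points in `[0, n)`. The blocks
before the one containing `n` are negligible except for the last, so one of two blocks contains at
least `c * m` points of `C` below some `m` not less than its left end. If the set `B` of indices of
such blocks meets `A` infinitely often, then `C ∩ f A` has upper density at least `c`.
-/

theorem ncard_inter_Iio_le_add (C : Set ℕ) (a b : ℕ) {d n : ℕ} (hnd : n ≤ d) :
    (C ∩ Set.Iio n).ncard ≤
      a + (C ∩ Set.Ico a b ∩ Set.Iio b).ncard + (C ∩ Set.Ico b d ∩ Set.Iio n).ncard := by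
  have hcover : C ∩ Set.Iio n ⊆
      Set.Iio a ∪ C ∩ Set.Ico a b ∩ Set.Iio b ∪ C ∩ Set.Ico b d ∩ Set.Iio n := by
    rintro x ⟨hxC, hxn⟩
    simp only [Set.mem_Iio, Set.mem_union, Set.mem_inter_iff, Set.mem_Ico] at hxn ⊢
    grind
  calc (C ∩ Set.Iio n).ncard
      ≤ (Set.Iio a ∪ C ∩ Set.Ico a b ∩ Set.Iio b ∪ C ∩ Set.Ico b d ∩ Set.Iio n).ncard :=
        Set.ncard_le_ncard hcover
    _ ≤ (Set.Iio a ∪ C ∩ Set.Ico a b ∩ Set.Iio b).ncard +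
          (C ∩ Set.Ico b d ∩ Set.Iio n).ncard := Set.ncard_union_le _ _
    _ ≤ a + (C ∩ Set.Ico a b ∩ Set.Iio b).ncard + (C ∩ Set.Ico b d ∩ Set.Iio n).ncard := by
        grw [Set.ncard_union_le, Set.ncard_Iio_nat]

section UpperDensity

variable (A : Set ℕ) {α c : ℝ}

theorem ncard_inter_Iio_div_le_one (n : ℕ) :
    ((A ∩ Set.Iio n).ncard : ℝ) / n ≤ 1 := by
  refine div_le_one_of_le₀ (Nat.cast_le.2 ?_) n.cast_nonneg
  simpa using Set.ncard_le_ncard (Set.inter_subset_right (s := A)) (Set.finite_Iio n)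

theorem isCoboundedUnder_ncard_inter_Iio_div :
    IsCoboundedUnder (· ≤ ·) atTop (fun n : ℕ => ((A ∩ Set.Iio n).ncard : ℝ) / n) :=
  IsBoundedUnder.isCoboundedUnder_le (isBoundedUnder_of ⟨0, fun _ => by positivity⟩)

theorem upperDensity_le_one : upperDensity A ≤ 1 :=
  limsup_le_of_le (isCoboundedUnder_ncard_inter_Iio_div A)
    (Eventually.of_forall (ncard_inter_Iio_div_le_one A))

variable {A}

theorem le_upperDensity_of_frequently
    (h : ∃ᶠ n : ℕ in atTop, c * n ≤ (A ∩ Set.Iio n).ncard) : c ≤ upperDensity A := by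
  refine le_limsup_of_frequently_le ?_ (isBoundedUnder_of ⟨1, ncard_inter_Iio_div_le_one A⟩)
  refine (h.and_eventually (eventually_gt_atTop 0)).mono fun n ⟨hn, hpos⟩ => ?_
  rwa [le_div_iff₀ (Nat.cast_pos.2 hpos)]

theorem frequently_mul_lt_ncard_of_lt_upperDensity (h : c < upperDensity A) :
    ∃ᶠ n : ℕ in atTop, c * n < (A ∩ Set.Iio n).ncard := by
  have hfreq := frequently_lt_of_lt_limsup (isCoboundedUnder_ncard_inter_Iio_div A) h
  refine (hfreq.and_eventually (eventually_gt_atTop 0)).mono fun n ⟨hn, hpos⟩ => ?_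
  rwa [← lt_div_iff₀ (Nat.cast_pos.2 hpos)]

theorem HasDensity.upperDensity_eq (h : HasDensity A α) : upperDensity A = α :=
  Tendsto.limsup_eq h

theorem hasDensity_zero_of_finite (hA : A.Finite) : HasDensity A 0 := by
  refine squeeze_zero (fun _ => by positivity) (fun n => ?_)
    (tendsto_const_div_atTop_nhds_zero_nat (A.ncard : ℝ))
  gcongr
  exact Set.inter_subset_left

end UpperDensity

/-- The map `A ↦ ⋃_{n∈A} [k_n, k_{n+1})`, called `f` in the informal statement. -/
def blockUnion (k : ℕ → ℕ) (A : Set ℕ) : Set ℕ :=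
  ⋃ n ∈ A, Set.Ico (k n) (k (n + 1))

/-- The indices of the blocks in which `C` has relative density at least `c`, where the part of `C`
in the block `[k_j, k_{j+1})` may be measured against any initial segment `[0, n)` with `n ≥ k_j`.
Allowing `n` to differ from `k_{j+1}` matters because `C` may be sparse at the end of a long
block. -/
def denseBlocks (k : ℕ → ℕ) (C : Set ℕ) (c : ℝ) : Set ℕ :=
  {j | ∃ n ≥ k j, c * n ≤ (C ∩ Set.Ico (k j) (k (j + 1)) ∩ Set.Iio n).ncard}

section Blocks

variable {k : ℕ → ℕ}

theorem exists_ge_mem_Ico_of_le (htop : Tendsto k atTop atTop) (hmono : Monotone k) {N n : ℕ}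
    (hn : k N ≤ n) : ∃ j ≥ N, n ∈ Set.Ico (k j) (k (j + 1)) := by
  have hunbdd : ¬BddAbove (k '' Set.Ici N) := by
    rintro ⟨b, hb⟩
    obtain ⟨j, hj, hbj⟩ := ((eventually_ge_atTop N).and (htop.eventually_gt_atTop b)).exists
    exact hbj.not_ge (hb (Set.mem_image_of_mem k hj))
  have hcover := biUnion_Ici_Ico_map_succ (fun _ hj => hmono hj) hunbdd
  obtain ⟨j, hj, hnj⟩ := Set.mem_iUnion₂.1 (hcover.ge hn)
  exact ⟨j, hj, hnj⟩

theorem iUnion_Ico_eq_univ (htop : Tendsto k atTop atTop) (hmono : Monotone k) (hzero : k 0 = 0) :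
    ⋃ n, Set.Ico (k n) (k (n + 1)) = Set.univ :=
  Set.eq_univ_of_forall fun n =>
    let ⟨j, _, hj⟩ := exists_ge_mem_Ico_of_le htop hmono (hzero.trans_le n.zero_le)
    Set.mem_iUnion_of_mem j hj

theorem blockUnion_union (A B : Set ℕ) :
    blockUnion k (A ∪ B) = blockUnion k A ∪ blockUnion k B :=
  Set.biUnion_union A B _

theorem blockUnion_inter (hmono : Monotone k) (A B : Set ℕ) :
    blockUnion k (A ∩ B) = blockUnion k A ∩ blockUnion k B :=
  Set.biUnion_inter_of_pairwise_disjoint hmono.pairwise_disjoint_on_Ico_succ A B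

theorem blockUnion_compl (htop : Tendsto k atTop atTop) (hmono : Monotone k) (hzero : k 0 = 0)
    (A : Set ℕ) : blockUnion k Aᶜ = (blockUnion k A)ᶜ :=
  (Set.biUnion_compl_eq_of_pairwise_disjoint_of_iUnion_eq_univ
    (iUnion_Ico_eq_univ htop hmono hzero) hmono.pairwise_disjoint_on_Ico_succ A).symm

theorem blockUnion_symmDiff_subset (A B : Set ℕ) :
    blockUnion k A ∆ blockUnion k B ⊆ blockUnion k (A ∆ B) := by
  have hdiff (S T : Set ℕ) : blockUnion k S \ blockUnion k T ⊆ blockUnion k (S \ T) :=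
    Set.sdiff_subset_iff.2 <| by
      rw [← blockUnion_union, Set.union_sdiff_self, blockUnion_union]
      exact Set.subset_union_right
  rw [Set.symmDiff_def, Set.symmDiff_def, blockUnion_union]
  exact Set.union_subset_union (hdiff A B) (hdiff B A)

theorem finite_blockUnion {A : Set ℕ} (hA : A.Finite) : (blockUnion k A).Finite :=
  hA.biUnion fun _ _ => Set.finite_Ico _ _

theorem le_upperDensity_inter_blockUnion (htop : Tendsto k atTop atTop) {A C : Set ℕ} {c : ℝ}
    (h : (denseBlocks k C c ∩ A).Infinite) : c ≤ upperDensity (C ∩ blockUnion k A) := by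
  refine le_upperDensity_of_frequently (frequently_atTop.2 fun N => ?_)
  obtain ⟨j, ⟨⟨n, hn, hc⟩, hjA⟩, hNj⟩ :=
    ((Nat.frequently_atTop_iff_infinite.2 h).and_eventually (htop.eventually_ge_atTop N)).exists
  refine ⟨n, hNj.trans hn, hc.trans (Nat.cast_le.2 (Set.ncard_le_ncard ?_))⟩
  gcongr
  exact Set.subset_biUnion_of_mem (u := fun n => Set.Ico (k n) (k (n + 1))) hjA

end Blocks

section Gaps

variable {k : ℕ → ℕ}
  (hlim : Tendsto (fun n : ℕ => ((k (n + 1) : ℝ) - (k n : ℝ)) / (k (n + 1) : ℝ)) atTop (𝓝 1))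

include hlim

theorem eventually_lt_mul_of_tendsto_gap_ratio {ε : ℝ} (hε : 0 < ε) :
    ∀ᶠ n in atTop, (k n : ℝ) < ε * k (n + 1) := by
  filter_upwards [hlim.eventually_const_lt (sub_lt_self 1 hε),
    hlim.eventually_ne one_ne_zero] with n hn hne
  have hpos : (0 : ℝ) < k (n + 1) :=
    (Nat.cast_nonneg _).lt_of_ne' fun h => hne (by rw [h, div_zero])
  rw [lt_div_iff₀ hpos] at hn
  linarith

theorem tendsto_atTop_of_tendsto_gap_ratio : Tendsto k atTop atTop := by
  obtain ⟨N, hN⟩ := eventually_atTop.1 (eventually_lt_mul_of_tendsto_gap_ratio hlim one_pos)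
  have hstrict : StrictMono fun n => k (n + N) := strictMono_nat_of_lt_succ fun n => by
    simpa [Nat.add_right_comm] using hN (n + N) (Nat.le_add_left N n)
  exact (tendsto_add_atTop_iff_nat N).1 hstrict.tendsto_atTop

theorem eventually_mem_denseBlocks_univ {c : ℝ} (hc : c < 1) :
    ∀ᶠ j in atTop, j ∈ denseBlocks k Set.univ c := by
  filter_upwards [eventually_lt_mul_of_tendsto_gap_ratio hlim (sub_pos.2 hc),
    eventually_lt_mul_of_tendsto_gap_ratio hlim one_pos] with j hj hlt
  have hle : k j ≤ k (j + 1) := by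
    rw [one_mul] at hlt
    exact_mod_cast hlt.le
  refine ⟨k (j + 1), hle, ?_⟩
  have hblock : Set.univ ∩ Set.Ico (k j) (k (j + 1)) ∩ Set.Iio (k (j + 1)) =
      Set.Ico (k j) (k (j + 1)) := by
    rw [Set.univ_inter, Set.inter_eq_left]
    exact Set.Ico_subset_Iio_self
  rw [hblock, Set.ncard_Ico_nat, Nat.cast_sub hle]
  linarith

theorem upperDensity_blockUnion_eq_one {A : Set ℕ} (hA : A.Infinite) :
    upperDensity (blockUnion k A) = 1 := by
  refine (upperDensity_le_one _).antisymm (le_of_forall_lt_imp_le_of_dense fun c hc => ?_)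
  have hinf : (denseBlocks k Set.univ c ∩ A).Infinite :=
    Nat.frequently_atTop_iff_infinite.1 <|
      (eventually_mem_denseBlocks_univ hlim hc).and_frequently
        (Nat.frequently_atTop_iff_infinite.2 hA)
  simpa using le_upperDensity_inter_blockUnion (tendsto_atTop_of_tendsto_gap_ratio hlim) hinf

theorem infinite_denseBlocks (hmono : Monotone k) {C : Set ℕ} {c : ℝ} (hc : 0 ≤ c)
    (hcC : 2 * c < upperDensity C) : (denseBlocks k C c).Infinite := by
  have htop := tendsto_atTop_of_tendsto_gap_ratio hlim
  obtain ⟨c', hcc', hc'C⟩ := exists_between hcC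
  obtain ⟨M, hM⟩ :=
    eventually_atTop.1 (eventually_lt_mul_of_tendsto_gap_ratio hlim (sub_pos.2 hcc'))
  refine Nat.frequently_atTop_iff_infinite.1 (frequently_atTop.2 fun N => ?_)
  obtain ⟨n, hkn, hn⟩ :=
    frequently_atTop.1 (frequently_mul_lt_ncard_of_lt_upperDensity hc'C) (k (max M N + 1))
  obtain ⟨i, hi, hin⟩ := exists_ge_mem_Ico_of_le htop hmono hkn
  obtain ⟨j, rfl⟩ : ∃ j, i = j + 1 := Nat.exists_eq_add_one_of_ne_zero (by lia)
  have hkjn : (k (j + 1) : ℝ) ≤ n := Nat.cast_le.2 hin.1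
  have hkj : (k j : ℝ) ≤ (c' - 2 * c) * n :=
    (hM j (by lia)).le.trans (mul_le_mul_of_nonneg_left hkjn (sub_pos.2 hcc').le)
  have hcount : ((C ∩ Set.Iio n).ncard : ℝ) ≤
      k j + (C ∩ Set.Ico (k j) (k (j + 1)) ∩ Set.Iio (k (j + 1))).ncard +
        (C ∩ Set.Ico (k (j + 1)) (k (j + 1 + 1)) ∩ Set.Iio n).ncard :=
    mod_cast ncard_inter_Iio_le_add C (k j) (k (j + 1)) hin.2.le
  by_cases hlast : c * n ≤ (C ∩ Set.Ico (k (j + 1)) (k (j + 1 + 1)) ∩ Set.Iio n).ncard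
  · exact ⟨j + 1, by lia, n, hin.1, hlast⟩
  · refine ⟨j, by lia, k (j + 1), hmono j.le_succ, ?_⟩
    have hckn : c * k (j + 1) ≤ c * n := mul_le_mul_of_nonneg_left hkjn hc
    linarith

theorem exists_upperDensity_inter_blockUnion_pos (hmono : Monotone k) {𝒜 : Set (Set ℕ)}
    (h𝒜 : ∀ B : Set ℕ, B.Infinite → ∃ A ∈ 𝒜, (B ∩ A).Infinite) {C : Set ℕ}
    (hC : 0 < upperDensity C) : ∃ A ∈ 𝒜, 0 < upperDensity (C ∩ blockUnion k A) := by
  have hpos : 0 < upperDensity C / 4 := by positivity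
  have hquarter : 2 * (upperDensity C / 4) < upperDensity C := by linarith
  obtain ⟨A, hA, hinf⟩ := h𝒜 _ (infinite_denseBlocks hlim hmono hpos.le hquarter)
  exact ⟨A, hA, hpos.trans_le <|
    le_upperDensity_inter_blockUnion (tendsto_atTop_of_tendsto_gap_ratio hlim) hinf⟩

end Gaps

theorem interval_map_regular_embedding_general
    (k : ℕ → ℕ) (hmono : Monotone k) (hzero : k 0 = 0)
    (hlim : Tendsto (fun n : ℕ => ((k (n + 1) : ℝ) - (k n : ℝ)) / (k (n + 1) : ℝ))
      atTop (𝓝 1))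
    (f : Set ℕ → Set ℕ)
    (hf : ∀ A : Set ℕ, f A = ⋃ n ∈ A, Set.Ico (k n) (k (n + 1))) :
    (∀ A B : Set ℕ, f (A ∪ B) = f A ∪ f B) ∧
    (∀ A B : Set ℕ, f (A ∩ B) = f A ∩ f B) ∧
    (∀ A : Set ℕ, f Aᶜ = (f A)ᶜ) ∧
    (∀ A B : Set ℕ, (A ∆ B).Finite → HasDensity (f A ∆ f B) 0) ∧
    (∀ A : Set ℕ, A.Infinite → upperDensity (f A) = 1 ∧ ¬ HasDensity (f A) 0) ∧
    (∀ 𝒜 : Set (Set ℕ), (∀ B : Set ℕ, B.Infinite → ∃ A ∈ 𝒜, (B ∩ A).Infinite) →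
      ∀ C : Set ℕ, 0 < upperDensity C → ∃ A ∈ 𝒜, 0 < upperDensity (C ∩ f A)) := by
  obtain rfl : f = blockUnion k := funext hf
  have htop := tendsto_atTop_of_tendsto_gap_ratio hlim
  refine ⟨blockUnion_union, blockUnion_inter hmono, blockUnion_compl htop hmono hzero,
    fun A B hAB => ?_, fun A hA => ?_,
    fun 𝒜 h𝒜 C hC => exists_upperDensity_inter_blockUnion_pos hlim hmono h𝒜 hC⟩
  · exact hasDensity_zero_of_finite <|
      (finite_blockUnion hAB).subset (blockUnion_symmDiff_subset A B)
  · have hone := upperDensity_blockUnion_eq_one hlim hA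
    exact ⟨hone, fun hd => one_ne_zero (hone.symm.trans hd.upperDensity_eq)⟩

/-- Proposition 1: the map `A ↦ ⋃_{n∈A} [k_n, k_{n+1})` induces a regular embedding of
`𝒫(ℕ)/fin` into `𝒫(ℕ)/Δ_d`. -/
theorem interval_map_regular_embedding
    (k : ℕ → ℕ) (hmono : StrictMono k) (hzero : k 0 = 0)
    (hlim : Tendsto (fun n : ℕ => ((k (n + 1) : ℝ) - (k n : ℝ)) / (k (n + 1) : ℝ))
      atTop (nhds 1))
    (f : Set ℕ → Set ℕ)
    (hf : ∀ A : Set ℕ, f A = ⋃ n ∈ A, Set.Ico (k n) (k (n + 1))) :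
    -- (i) `f` is a Boolean homomorphism
    (∀ A B : Set ℕ, f (A ∪ B) = f A ∪ f B) ∧
    (∀ A B : Set ℕ, f (A ∩ B) = f A ∩ f B) ∧
    (∀ A : Set ℕ, f Aᶜ = (f A)ᶜ) ∧
    -- (ii) `f` is well defined on the quotients
    (∀ A B : Set ℕ, (A ∆ B).Finite → HasDensity (f A ∆ f B) 0) ∧
    -- (iii) `f` is an embedding: infinite sets are sent to sets of upper density one
    (∀ A : Set ℕ, A.Infinite → upperDensity (f A) = 1 ∧ ¬ HasDensity (f A) 0) ∧
    -- (iv) `f` maps maximal antichains to maximal antichains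
    (∀ 𝒜 : Set (Set ℕ), (∀ A ∈ 𝒜, A.Infinite) →
      (∀ A ∈ 𝒜, ∀ B ∈ 𝒜, A ≠ B → (A ∩ B).Finite) →
      (∀ B : Set ℕ, B.Infinite → ∃ A ∈ 𝒜, (B ∩ A).Infinite) →
      ∀ C : Set ℕ, 0 < upperDensity C → ∃ A ∈ 𝒜, 0 < upperDensity (C ∩ f A)) := by
  obtain ⟨hunion, hinter, hcompl, hfin, hinf, hreg⟩ :=
    interval_map_regular_embedding_general k hmono.monotone hzero hlim f hf
  exact ⟨hunion, hinter, hcompl, hfin, hinf, fun 𝒜 _ _ => hreg 𝒜⟩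
end

section
/- The quotient 𝒫(ℕ)/Δ_d has no (ω,ω)-gaps: for all sequences (A_n)_{n∈ℕ} and (B_m)_{m∈ℕ} of subsets of ℕ such that d(A_n ∩ B_m) = 0 for all n, m ∈ ℕ, there exists C ⊆ ℕ such that d(A_n ∖ C) = 0 for every n and d(C ∩ B_m) = 0 for every m. -/
open Filter Topology MeasureTheory
open scoped symmDiff

/-!
For `C = ⨆ₙ (Aₙ \ (B₀ ⊔ ⋯ ⊔ Bₙ))`, the difference `Aₙ \ C` lies below the finite join of the
`Aₙ ⊓ Bₘ` with `m ≤ n`, and `C ⊓ Bₘ` lies below the finite join of the `Aₙ ⊓ Bₘ` with `n < m`.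
So every ideal containing all `Aₙ ⊓ Bₘ`, in particular `Δ_d`, contains both.
-/

section CompleteBooleanAlgebra

variable {α : Type*} [CompleteBooleanAlgebra α]

/-- The join of the `A n \ (B 0 ⊔ ⋯ ⊔ B n)`, which separates `A` from `B` modulo every ideal
containing all `A n ⊓ B m`. -/
def sequenceSeparator (A B : ℕ → α) : α :=
  ⨆ n, A n \ (Finset.Iic n).sup B

theorem sdiff_sequenceSeparator_le (A B : ℕ → α) (n : ℕ) :
    A n \ sequenceSeparator A B ≤ (Finset.Iic n).sup fun m => A n ⊓ B m :=
  calc A n \ sequenceSeparator A B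
    _ ≤ A n \ (A n \ (Finset.Iic n).sup B) :=
      sdiff_le_sdiff_left (le_iSup (fun k => A k \ (Finset.Iic k).sup B) n)
    _ = A n ⊓ (Finset.Iic n).sup B := sdiff_sdiff_right_self
    _ = (Finset.Iic n).sup fun m => A n ⊓ B m := Finset.sup_inf_distrib_left ..

theorem sequenceSeparator_inf_le (A B : ℕ → α) (m : ℕ) :
    sequenceSeparator A B ⊓ B m ≤ (Finset.Iio m).sup fun n => A n ⊓ B m := by
  rw [sequenceSeparator, iSup_inf_eq]
  refine iSup_le fun n => ?_
  obtain hnm | hmn := lt_or_ge n m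
  · calc A n \ (Finset.Iic n).sup B ⊓ B m
      _ ≤ A n ⊓ B m := inf_le_inf_right _ sdiff_le
      _ ≤ (Finset.Iio m).sup fun n => A n ⊓ B m :=
        Finset.le_sup (f := fun n => A n ⊓ B m) (Finset.mem_Iio.2 hnm)
  · have hdisj : Disjoint (A n \ (Finset.Iic n).sup B) (B m) :=
      disjoint_sdiff_self_left.mono_right (Finset.le_sup (Finset.mem_Iic.2 hmn))
    exact hdisj.eq_bot.trans_le bot_le

theorem no_omega_omega_gaps_general (I : Order.Ideal α) (A B : ℕ → α)
    (h : ∀ n m, A n ⊓ B m ∈ I) :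
    ∃ C, (∀ n, A n \ C ∈ I) ∧ ∀ m, C ⊓ B m ∈ I :=
  ⟨sequenceSeparator A B,
    fun n => I.lower (sdiff_sequenceSeparator_le A B n)
      (I.finsetSup_mem_iff.2 fun m _ => h n m),
    fun m => I.lower (sequenceSeparator_inf_le A B m)
      (I.finsetSup_mem_iff.2 fun n _ => h n m)⟩

end CompleteBooleanAlgebra

theorem hasDensity_empty : HasDensity ∅ 0 := by
  simp [HasDensity]

theorem HasDensity.zero_mono {S T : Set ℕ} (hT : HasDensity T 0) (hST : S ⊆ T) :
    HasDensity S 0 := by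
  refine squeeze_zero (fun n => by positivity) (fun n => ?_) hT
  gcongr
  exact (Set.finite_Iio n).inter_of_right T

theorem HasDensity.zero_union {S T : Set ℕ} (hS : HasDensity S 0) (hT : HasDensity T 0) :
    HasDensity (S ∪ T) 0 := by
  have hsum := hS.add hT
  rw [add_zero] at hsum
  refine squeeze_zero (fun n => by positivity) (fun n => ?_) hsum
  rw [← add_div, Set.union_inter_distrib_right]
  gcongr
  exact_mod_cast Set.ncard_union_le _ _

/-- The ideal `Δ_d` of sets of asymptotic density zero, as an order ideal of `Set ℕ`. -/
def densityZeroIdeal : Order.Ideal (Set ℕ) where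
  carrier := {S | HasDensity S 0}
  lower' _ _ hST hT := hT.zero_mono hST
  nonempty' := ⟨∅, hasDensity_empty⟩
  directed' S hS T hT := ⟨S ∪ T, hS.zero_union hT, Set.subset_union_left, Set.subset_union_right⟩

/-- Proposition 2: `𝒫(ℕ)/Δ_d` has no `(ω,ω)`-gaps. -/
theorem no_omega_omega_gaps
    (A B : ℕ → Set ℕ) (h : ∀ n m : ℕ, HasDensity (A n ∩ B m) 0) :
    ∃ C : Set ℕ, (∀ n : ℕ, HasDensity (A n \ C) 0) ∧ (∀ m : ℕ, HasDensity (C ∩ B m) 0) :=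
  no_omega_omega_gaps_general densityZeroIdeal A B h
end

section
/- The Stone space of 𝒫(ℕ)/Δ_d has a weak P-point: there exists an ultrafilter U on ℕ containing no set of asymptotic density zero such that for every sequence (U_n)_{n∈ℕ} of ultrafilters on ℕ, each containing no set of asymptotic density zero and each distinct from U, there exists A ∈ U with A ∉ U_n for every n ∈ ℕ. -/
open Filter Topology MeasureTheory
open scoped symmDiff

/-!
The construction is Kunen's. A row of sets is linked if, for every `n`, the intersection of any
`n + 1` of its sets of level `n` is negligible. Such a row turns a sequence `B 0, B 1, …` of large
sets into a family of large sets `D j` such that any `m + 1` of them have intersection almost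
contained in `B m`. Starting with `𝔠` independent rows, a transfinite recursion of length `𝔠` treats
all sequences, using up finitely many rows at each stage, and yields an ultrafilter `U` for which
every sequence of members of `U` has such a family in `U`, indexed by an uncountable type. Given
ultrafilters `V n ≠ U`, take `B n ∈ U` outside `V n`: each `V n` then contains at most `n` of the
`D j`, so that some `D j` is missed by all of them.

The rows live on a countable set of finite approximations, and they are pulled back to `ℕ` along
`Nat.log 2`, under which preimages of infinite sets do not have density zero.
-/

universe u

open Set Cardinal

namespace WeakPPoint

section Preliminaries

/-! ### Cardinality and transfinite recursion -/

instance uncountable_set {α : Type*} [Infinite α] : Uncountable (Set α) := by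
  rw [← aleph0_lt_mk_iff, mk_set]
  exact (aleph0_le_mk α).trans_lt (cantor _)

lemma exists_surjective_sequence (α : Type*) [Countable α] :
    ∃ B : Set ℕ → ℕ → Set α, Function.Surjective B := by
  obtain ⟨e, he⟩ := exists_injective_nat (ℕ × α)
  refine ⟨fun X n => {x | e (n, x) ∈ X}, fun C => ?_⟩
  obtain ⟨X, hX⟩ := he.preimage_surjective {y | y.2 ∈ C y.1}
  exact ⟨X, funext fun n => Set.ext fun x => Set.ext_iff.1 hX (n, x)⟩

lemma exists_forall_notMem_finset {S ι : Type u} [Uncountable ι] (hS : #S < #ι)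
    (τ : S → Finset ι) : ∃ i, ∀ s, i ∉ τ s := by
  have hcard : #(⋃ s, (τ s : Set ι)) < #ι := calc
    #(⋃ s, (τ s : Set ι)) ≤ sum fun s => #(τ s : Set ι) := mk_iUnion_le_sum_mk
    _ ≤ sum fun _ : S => ℵ₀ := sum_le_sum _ _ fun s => (τ s).finite_toSet.lt_aleph0.le
    _ = #S * ℵ₀ := by simp
    _ < #ι := mul_lt_of_lt (aleph0_le_mk ι) hS (aleph0_lt_mk_iff.2 ‹_›)
  by_contra! h
  have huniv : ⋃ s, (τ s : Set ι) = Set.univ := iUnion_eq_univ_iff.2 h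
  simp [huniv] at hcard

lemma exists_forall_of_transfinite_step {T β : Type*} [Preorder T] [WellFoundedLT T] [Nonempty β]
    (P : ∀ t : T, (Iio t → β) → β → Prop)
    (step : ∀ t (f : T → β), (∀ s < t, P s ((Iio s).domRestrict f) (f s)) →
      ∃ b, P t ((Iio t).domRestrict f) b) :
    ∃ f : T → β, ∀ t, P t ((Iio t).domRestrict f) (f t) := by
  let f : T → β := wellFounded_lt.fix fun t g => Classical.epsilon (P t fun s => g s s.2)
  have hf : ∀ t, f t = Classical.epsilon (P t ((Iio t).domRestrict f)) := wellFounded_lt.fix_eq _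
  refine ⟨f, fun t => ?_⟩
  induction t using WellFoundedLT.induction with
  | _ t ih =>
    rw [hf t]
    exact Classical.epsilon_spec (step t f ih)

lemma antitoneOn_of_le_iInf_Iio {T L : Type*} [PartialOrder T] [CompleteLattice L] {f : T → L}
    {I : Set T} (h : ∀ t ∈ I, f t ≤ ⨅ s : Iio t, f s) : AntitoneOn f I := by
  intro s _ t ht hst
  rcases hst.eq_or_lt with rfl | hlt
  · rfl
  · exact (h t ht).trans (iInf_le (fun r : Iio t => f r) ⟨s, hlt⟩)

end Preliminaries

section Density

/-! ### The density filter -/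

variable {A B : Set ℕ}

lemma hasDensity_zero_of_subset (hB : HasDensity B 0) (h : A ⊆ B) : HasDensity A 0 := by
  refine squeeze_zero (fun n => by positivity) (fun n => ?_) hB
  gcongr
  exact (finite_Iio n).inter_of_right B

lemma hasDensity_zero_union (hA : HasDensity A 0) (hB : HasDensity B 0) :
    HasDensity (A ∪ B) 0 := by
  refine squeeze_zero (fun n => by positivity) (fun n => ?_) (add_zero (0 : ℝ) ▸ hA.add hB)
  rw [← add_div, union_inter_distrib_right]
  gcongr
  exact_mod_cast ncard_union_le _ _

lemma hasDensity_zero_of_finite (hA : A.Finite) : HasDensity A 0 := by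
  refine squeeze_zero (fun n => by positivity) (fun n => ?_)
    (tendsto_const_div_atTop_nhds_zero_nat (A.ncard : ℝ))
  gcongr
  exact inter_subset_left

lemma half_le_ncard_div_of_Ico_subset {m : ℕ} (hm : 0 < m) (h : Ico m (2 * m) ⊆ A) :
    1 / 2 ≤ ((A ∩ Iio (2 * m)).ncard : ℝ) / (2 * m : ℕ) := by
  have hcard : m ≤ (A ∩ Iio (2 * m)).ncard := calc
    m = (Ico m (2 * m)).ncard := by rw [← Finset.coe_Ico, ncard_coe_finset, Nat.card_Ico]; lia
    _ ≤ (A ∩ Iio (2 * m)).ncard :=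
      ncard_le_ncard (subset_inter h fun _ hx => hx.2) ((finite_Iio _).inter_of_right A)
  rw [le_div_iff₀ (by positivity)]
  push_cast
  linarith [(Nat.cast_le (α := ℝ)).2 hcard]

lemma not_hasDensity_zero_of_frequently_Ico_subset
    (h : ∃ᶠ m in atTop, Ico m (2 * m) ⊆ A) : ¬ HasDensity A 0 := by
  intro hA
  have hsmall : ∀ᶠ m in atTop, ((A ∩ Iio (2 * m)).ncard : ℝ) / (2 * m : ℕ) < 1 / 2 :=
    (tendsto_id.const_mul_atTop' (two_pos : (0 : ℕ) < 2)).eventually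
      (hA.eventually_lt_const (by norm_num))
  obtain ⟨m, hsub, hlt, hm⟩ := (h.and_eventually (hsmall.and (eventually_gt_atTop 0))).exists
  exact (half_le_ncard_div_of_Ico_subset hm hsub).not_gt hlt

lemma not_hasDensity_zero_preimage_log {L : Set ℕ} (hL : L.Infinite) :
    ¬ HasDensity (Nat.log 2 ⁻¹' L) 0 := by
  have hpow : Tendsto (fun l : ℕ => 2 ^ l) atTop atTop :=
    tendsto_pow_atTop_atTop_of_one_lt one_lt_two
  refine not_hasDensity_zero_of_frequently_Ico_subset (hpow.frequently ?_)
  refine (Nat.frequently_atTop_iff_infinite.2 hL).mono fun l hl x hx => ?_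
  have hlog : Nat.log 2 x = l :=
    Nat.log_eq_of_pow_le_of_lt_pow hx.1 (by rw [pow_succ']; exact hx.2)
  exact mem_preimage.2 (hlog ▸ hl)

lemma tendsto_natLog_two_cofinite : Tendsto (Nat.log 2) cofinite atTop := by
  rw [Nat.cofinite_eq_atTop]
  exact tendsto_atTop_atTop_of_monotone Nat.log_monotone
    fun b => ⟨2 ^ b, (Nat.log_pow one_lt_two b).ge⟩

/-- The filter of sets of asymptotic density one, dual to the ideal `Δ_d`: the points of the
Stone space of `𝒫(ℕ)/Δ_d` are the ultrafilters finer than it. -/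
def densityOneFilter : Filter ℕ :=
  Filter.comk (HasDensity · 0) (hasDensity_zero_of_finite finite_empty)
    (fun _ hB _ => hasDensity_zero_of_subset hB) fun _ hA _ => hasDensity_zero_union hA

lemma densityOneFilter_le_cofinite : densityOneFilter ≤ cofinite := fun _ hA =>
  hasDensity_zero_of_finite hA

lemma atTop_le_map_log_densityOneFilter : atTop ≤ map (Nat.log 2) densityOneFilter := by
  intro L hL
  rw [← Nat.cofinite_eq_atTop]
  by_contra hinf
  exact not_hasDensity_zero_preimage_log hinf hL

lemma ultrafilter_le_densityOneFilter_iff {U : Ultrafilter ℕ} :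
    ↑U ≤ densityOneFilter ↔ ∀ A ∈ U, ¬ HasDensity A 0 := by
  have hdual (A : Set ℕ) : A ∈ densityOneFilter ↔ HasDensity Aᶜ 0 := Iff.rfl
  refine ⟨fun hU A hA h => ?_, fun hU A hA => ?_⟩
  · exact Ultrafilter.compl_mem_iff_notMem.1 (hU ((hdual Aᶜ).2 (by rwa [compl_compl]))) hA
  · by_contra hAU
    exact hU Aᶜ (Ultrafilter.compl_mem_iff_notMem.2 hAU) ((hdual A).1 hA)

end Density

section IndependentLinked

/-! ### Independent linked families and OK refinements -/

variable {α β κ : Type*} {ι : Type u} {A : ι → κ → ℕ → Set α} {F F' G : Filter α} {R R' : Set ι}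
  {B : ℕ → Set α}

/-- Kunen's linked rows, relative to `G`: the sets `A i j n` of row `i` grow with the level `n`, and
any `n + 1` of those of level `n` have negligible intersection, where a set is negligible if its
complement is in `G`. For subsets of `ℕ` and `G = cofinite` negligible means finite. -/
structure IsLinkedFamily (G : Filter α) (A : ι → κ → ℕ → Set α) : Prop where
  monotone (i : ι) (j : κ) : Monotone (A i j)
  eventually_exists_notMem (i : ι) {s : Finset κ} {n : ℕ} (hn : n < s.card) :
    ∀ᶠ x in G, ∃ j ∈ s, x ∉ A i j n

/-- The intersection of the sets `A i j #(σ i)` over `i ∈ τ` and `j ∈ σ i`. At any level below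
`#(σ i)` linkedness would make the intersection over `σ i` negligible. -/
def block (A : ι → κ → ℕ → Set α) (τ : Finset ι) (σ : ι → Finset κ) : Set α :=
  {x | ∀ i ∈ τ, ∀ j ∈ σ i, x ∈ A i j (σ i).card}

/-- The rows of `A` outside `R` are independent modulo `F`: all blocks formed from them are
`F`-positive. In the recursion `R` is the set of rows already used up. -/
def IndependentOff (A : ι → κ → ℕ → Set α) (F : Filter α) (R : Set ι) : Prop :=
  ∀ τ : Finset ι, Disjoint (τ : Set ι) R → ∀ σ, ∃ᶠ x in F, x ∈ block A τ σ

lemma IsLinkedFamily.preimage {H : Filter β} {f : β → α} (hA : IsLinkedFamily G A)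
    (hf : Tendsto f H G) : IsLinkedFamily H fun i j n => f ⁻¹' A i j n where
  monotone i j _ _ h := preimage_mono (hA.monotone i j h)
  eventually_exists_notMem i _ _ hn := hf.eventually (hA.eventually_exists_notMem i hn)

lemma IndependentOff.preimage {H : Filter β} {f : β → α} (hA : IndependentOff A (map f H) R) :
    IndependentOff (fun i j n => f ⁻¹' A i j n) H R :=
  fun τ hτ σ => frequently_map.1 (hA τ hτ σ)

lemma IndependentOff.mono_filter (hA : IndependentOff A F R) (h : F ≤ F') :
    IndependentOff A F' R :=
  fun τ hτ σ => (hA τ hτ σ).filter_mono h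

lemma IndependentOff.mono_rows (hA : IndependentOff A F R) (h : R ⊆ R') :
    IndependentOff A F R' :=
  fun τ hτ => hA τ (hτ.mono_right h)

lemma IndependentOff.neBot (hA : IndependentOff A F R) : F.NeBot :=
  ⟨fun hF => by simpa [hF] using hA ∅ (by simp) fun _ => ∅⟩

lemma IndependentOff.inf_iInf {S : Type*} {f : S → Filter α} (hF : IndependentOff A F R)
    (hfF : ∀ s, f s ≤ F) (hdir : Directed (· ≥ ·) f) (hf : ∀ s, IndependentOff A (f s) R) :
    IndependentOff A (F ⊓ ⨅ s, f s) R := by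
  rcases isEmpty_or_nonempty S with hS | hS
  · simpa using hF
  · intro τ hτ σ hE
    rw [inf_eq_right.2 (iInf_le_of_le hS.some (hfF _))] at hE
    obtain ⟨s, hs⟩ := (mem_iInf_of_directed hdir _).1 hE
    exact hf s τ hτ σ hs

open Classical in
lemma block_union_piecewise {τ τ' : Finset ι} (h : Disjoint τ τ') (σ σ' : ι → Finset κ) :
    block A (τ ∪ τ') (τ.piecewise σ σ') = block A τ σ ∩ block A τ' σ' := by
  ext x
  simp only [block, Finset.mem_union, or_imp, forall_and, mem_inter_iff, mem_ofPred_eq]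
  refine and_congr (forall₂_congr fun i hi => ?_) (forall₂_congr fun i hi => ?_)
  · rw [Finset.piecewise_eq_of_mem _ _ _ hi]
  · rw [Finset.piecewise_eq_of_notMem _ _ _ (Finset.disjoint_right.1 h hi)]

lemma IndependentOff.inf_principal_block (hA : IndependentOff A F R) {τ : Finset ι}
    (hτ : Disjoint (τ : Set ι) R) (σ : ι → Finset κ) :
    IndependentOff A (F ⊓ 𝓟 (block A τ σ)) (R ∪ τ) := by
  classical
  intro τ' hτ' σ'
  rw [disjoint_union_right, Finset.disjoint_coe] at hτ'
  have hunion : Disjoint ((τ ∪ τ' : Finset ι) : Set ι) R := by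
    rw [Finset.coe_union]
    exact hτ.union_left hτ'.1
  have h := hA _ hunion (τ.piecewise σ σ')
  rw [block_union_piecewise hτ'.2.symm] at h
  exact frequently_inf_principal.2 h

lemma exists_tendsto_atTop_forall_lt_mem {φ : α → ℕ} (hφ : Tendsto φ F atTop)
    (hB : ∀ m, B m ∈ F) : ∃ ν : α → ℕ, Tendsto ν F atTop ∧ ∀ x, ∀ m < ν x, x ∈ B m := by
  classical
  refine ⟨fun x => Nat.findGreatest (fun n => ∀ m < n, x ∈ B m) (φ x),
    tendsto_atTop.2 fun k => ?_, fun x => ?_⟩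
  · have hBk : ∀ᶠ x in F, ∀ m < k, x ∈ B m :=
      (eventually_all_finite (finite_Iio k)).2 fun m _ => hB m
    filter_upwards [hφ.eventually_ge_atTop k, hBk] with x hφx hBx
    exact Nat.le_findGreatest hφx hBx
  · exact Nat.findGreatest_spec (P := fun n => ∀ m < n, x ∈ B m) (Nat.zero_le _) (by simp)

/-- The set `D j` of the construction: the level of row `i` required at the point `x` is `ν x`. -/
def diagonalSet (A : ι → κ → ℕ → Set α) (i : ι) (ν : α → ℕ) (j : κ) : Set α :=
  {x | x ∈ A i j (ν x)}

lemma IndependentOff.inf_iInf_diagonalSet (hmono : ∀ i j, Monotone (A i j))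
    (hA : IndependentOff A F R) {i : ι} (hi : i ∉ R) {ν : α → ℕ} (hν : Tendsto ν F atTop) :
    IndependentOff A (F ⊓ ⨅ j, 𝓟 (diagonalSet A i ν j)) (insert i R) := by
  classical
  intro τ hτ σ
  rw [disjoint_insert_right] at hτ
  rw [(F.basis_sets.inf (hasBasis_iInf_principal_finite _)).frequently_iff]
  rintro ⟨W, t⟩ ⟨hW : ∀ᶠ x in F, x ∈ W, ht : t.Finite⟩
  lift t to Finset κ using ht
  have hdisj : Disjoint (({i} ∪ τ : Finset ι) : Set ι) R := by
    simpa [disjoint_union_left, disjoint_insert_left, hi] using hτ.2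
  have hfreq := hA _ hdisj (({i} : Finset ι).piecewise (fun _ => t) σ)
  rw [block_union_piecewise (by simpa using hτ.1)] at hfreq
  obtain ⟨x, ⟨hxi, hxτ⟩, hxW, hxν⟩ :=
    (hfreq.and_eventually (hW.and (hν.eventually_ge_atTop t.card))).exists
  refine ⟨x, ⟨hxW, mem_iInter₂.2 fun j hj => ?_⟩, hxτ⟩
  exact hmono i j hxν (hxi i (by simp) j hj)

/-- The conclusion of Kunen's OK property for the sequence `B`: there are members `D j` of `F`,
`j : κ`, such that any `m + 1` of them have intersection contained in `B m` up to a `G`-negligible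
set. -/
def HasOKRefinement (κ : Type*) (G F : Filter α) (B : ℕ → Set α) : Prop :=
  ∃ D : κ → Set α, (∀ j, D j ∈ F) ∧
    ∀ (s : Finset κ) (m : ℕ), m < s.card → ∀ᶠ x in G, (∀ j ∈ s, x ∈ D j) → x ∈ B m

/-- No ultrafilter finer than `F` violates the OK property at the sequence `B`: either it cannot
contain all sets `B m`, or `F` already contains suitable sets `D j`. -/
def Settles (κ : Type*) (G F : Filter α) (B : ℕ → Set α) : Prop :=
  F ⊓ ⨅ m, 𝓟 (B m) = ⊥ ∨ HasOKRefinement κ G F B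

lemma HasOKRefinement.mono (h : HasOKRefinement κ G F B) (hF : F' ≤ F) :
    HasOKRefinement κ G F' B :=
  let ⟨D, hD, hDB⟩ := h
  ⟨D, fun j => hF (hD j), hDB⟩

lemma Settles.mono (h : Settles κ G F B) (hF : F' ≤ F) : Settles κ G F' B :=
  h.imp (eq_bot_mono (inf_le_inf_right _ hF)) fun h => h.mono hF

lemma IsLinkedFamily.eventually_mem_of_diagonalSet (hA : IsLinkedFamily G A) (i : ι) {ν : α → ℕ}
    (hνB : ∀ x, ∀ m < ν x, x ∈ B m) {s : Finset κ} {m : ℕ} (hm : m < s.card) :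
    ∀ᶠ x in G, (∀ j ∈ s, x ∈ diagonalSet A i ν j) → x ∈ B m := by
  filter_upwards [hA.eventually_exists_notMem i hm] with x ⟨j, hj, hxj⟩ hx
  by_contra hxB
  exact hxj (hA.monotone i j (not_lt.1 fun h => hxB (hνB x m h)) (hx j hj))

/-- One stage of the recursion: `p.1` refines `F` and settles `B`, at the cost of the finitely many
rows in `p.2`. -/
def IsStage (A : ι → κ → ℕ → Set α) (G F : Filter α) (R : Set ι) (B : ℕ → Set α)
    (p : Filter α × Finset ι) : Prop :=
  p.1 ≤ F ∧ IndependentOff A p.1 (R ∪ p.2) ∧ Settles κ G p.1 B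

lemma exists_isStage {φ : α → ℕ} (hφ : Tendsto φ F atTop) (hA : IsLinkedFamily G A)
    (hF : IndependentOff A F R) {i : ι} (hi : i ∉ R) (B : ℕ → Set α) :
    ∃ p, IsStage A G F R B p := by
  set H := F ⊓ ⨅ m, 𝓟 (B m)
  have hHF : H ≤ F := inf_le_left
  -- If independence survives adjoining all `B m`, then a fresh row provides the sets `D j`.
  -- Otherwise some block contradicts the `B m`, and adjoining that block rules the sequence out.
  by_cases hH : IndependentOff A H R
  · have hBH (m : ℕ) : B m ∈ H := le_principal_iff.1 (inf_le_right.trans (iInf_le _ m))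
    obtain ⟨ν, hν, hνB⟩ := exists_tendsto_atTop_forall_lt_mem (hφ.mono_left hHF) hBH
    refine ⟨(H ⊓ ⨅ j, 𝓟 (diagonalSet A i ν j), {i}), inf_le_left.trans hHF, ?_, .inr
      ⟨diagonalSet A i ν, fun j => ?_, fun s m => hA.eventually_mem_of_diagonalSet i hνB⟩⟩
    · simpa using hH.inf_iInf_diagonalSet hA.monotone hi hν
    · exact le_principal_iff.1 (inf_le_right.trans (iInf_le _ j))
  · obtain ⟨τ, hτ, σ, hσ⟩ : ∃ τ : Finset ι, Disjoint (τ : Set ι) R ∧ ∃ σ, (block A τ σ)ᶜ ∈ H := by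
      simpa [IndependentOff, Filter.Eventually, compl_def] using hH
    refine ⟨(F ⊓ 𝓟 (block A τ σ), τ), inf_le_left, hF.inf_principal_block hτ σ, .inl ?_⟩
    rw [inf_right_comm]
    exact inf_principal_eq_bot.2 hσ

/-! ### The transfinite recursion -/

lemma independentOff_limit {T : Type*} [LinearOrder T] (hF : IndependentOff A F ∅)
    {B : T → ℕ → Set α} {p : T → Filter α × Finset ι} {t : T}
    (hp : ∀ s < t, IsStage A G (F ⊓ ⨅ r : Iio s, (p r).1) (⋃ r : Iio s, (p r).2) (B s) (p s)) :
    IndependentOff A (F ⊓ ⨅ s : Iio t, (p s).1) (⋃ s : Iio t, (p s).2) := by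
  have hanti : Antitone fun s : Iio t => (p s).1 := antitoneOn_iff_antitone.1 <|
    antitoneOn_of_le_iInf_Iio fun s hs => (hp s hs).1.trans inf_le_right
  refine (hF.mono_rows (empty_subset _)).inf_iInf
    (fun s => (hp s s.2).1.trans inf_le_left) hanti.directed_ge fun s => ?_
  refine (hp s s.2).2.1.mono_rows (union_subset (iUnion_subset fun r => ?_) ?_)
  · exact subset_iUnion_of_subset ⟨r, r.2.out.trans s.2⟩ subset_rfl
  · exact subset_iUnion_of_subset s subset_rfl

lemma exists_forall_isStage {T : Type u} [LinearOrder T] [WellFoundedLT T] [Uncountable ι]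
    {φ : α → ℕ} (hφ : Tendsto φ F atTop) (hA : IsLinkedFamily G A) (hF : IndependentOff A F ∅)
    (hT : ∀ t : T, #(Iio t) < #ι) (B : T → ℕ → Set α) :
    ∃ p : T → Filter α × Finset ι, ∀ t,
      IsStage A G (F ⊓ ⨅ s : Iio t, (p s).1) (⋃ s : Iio t, (p s).2) (B t) (p t) := by
  refine exists_forall_of_transfinite_step
    (fun t p => IsStage A G (F ⊓ ⨅ s, (p s).1) (⋃ s, ((p s).2 : Set ι)) (B t)) fun t p hp => ?_
  obtain ⟨i, hi⟩ := exists_forall_notMem_finset (hT t) fun s => (p s).2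
  exact exists_isStage (hφ.mono_left inf_le_left) hA (independentOff_limit hF hp)
    (i := i) (by simpa using hi) (B t)

theorem exists_forall_settles [Uncountable ι] {φ : α → ℕ} (hφ : Tendsto φ F atTop)
    (hA : IsLinkedFamily G A) (hF : IndependentOff A F ∅) (B : ι → ℕ → Set α) :
    ∃ F' ≤ F, F'.NeBot ∧ ∀ i, Settles κ G F' (B i) := by
  let T := (#ι).ord.ToType
  obtain ⟨e⟩ : Nonempty (T ≃ ι) := by rw [← Cardinal.eq, mk_ord_toType]
  have : Nonempty T := ⟨e.symm (Classical.arbitrary ι)⟩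
  have hT (t : T) : #(Iio t) < #ι := by simpa [T] using mk_Iio_lt t (by simp [T])
  obtain ⟨p, hp⟩ := exists_forall_isStage hφ hA hF hT (B ∘ e)
  have hanti : Antitone fun t => (p t).1 := antitoneOn_univ.1 <|
    antitoneOn_of_le_iInf_Iio fun t _ => (hp t).1.trans inf_le_right
  refine ⟨⨅ t, (p t).1, iInf_le_of_le (Classical.arbitrary T) ((hp _).1.trans inf_le_left),
    iInf_neBot_of_directed' hanti.directed_ge fun t => (hp t).2.1.neBot, fun i => ?_⟩
  simpa using (hp (e.symm i)).2.2.mono (iInf_le (fun t => (p t).1) (e.symm i))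

/-! ### OK points are weak P-points -/

/-- `U` is a `κ`-OK point in the sense of Kunen, with `κ` given as an index type and with
`G`-negligible sets in place of finite ones. -/
def IsOK (κ : Type*) (G : Filter α) (U : Ultrafilter α) : Prop :=
  ∀ B : ℕ → Set α, (∀ m, B m ∈ U) → HasOKRefinement κ G U B

lemma exists_isOK [Uncountable ι] {φ : α → ℕ} (hφ : Tendsto φ F atTop)
    (hA : IsLinkedFamily G A) (hF : IndependentOff A F ∅) {B : ι → ℕ → Set α}
    (hB : Function.Surjective B) : ∃ U : Ultrafilter α, ↑U ≤ F ∧ IsOK κ G U := by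
  obtain ⟨F', hF'F, hF', hset⟩ := exists_forall_settles hφ hA hF B
  refine ⟨Ultrafilter.of F', (Ultrafilter.of_le F').trans hF'F, fun C hC => ?_⟩
  obtain ⟨i, rfl⟩ := hB C
  refine ((hset i).mono (Ultrafilter.of_le F')).resolve_left ?_
  rw [inf_eq_left.2 (le_iInf fun m => le_principal_iff.2 (hC m))]
  exact NeBot.ne inferInstance

/-- `U` is a weak P-point of the space of ultrafilters finer than `G`, the closed subset of `βα`
determined by `G`: it is not in the closure of any countable set of other points. -/
def IsWeakPPoint (G : Filter α) (U : Ultrafilter α) : Prop :=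
  ↑U ≤ G ∧ ∀ V : ℕ → Ultrafilter α, (∀ n, ↑(V n) ≤ G ∧ V n ≠ U) → ∃ A ∈ U, ∀ n, A ∉ V n

lemma finite_setOf_mem_ultrafilter {V : Ultrafilter α} (hV : ↑V ≤ G) {D : κ → Set α} {C : Set α}
    (hC : C ∉ V) {m : ℕ}
    (hD : ∀ s : Finset κ, m < s.card → ∀ᶠ x in G, (∀ j ∈ s, x ∈ D j) → x ∈ C) :
    {j | D j ∈ V}.Finite := by
  by_contra hinf
  obtain ⟨s, hs, hcard⟩ := Set.Infinite.exists_subset_card_eq hinf (m + 1)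
  have hmem : ∀ᶠ x in (V : Filter α), ∀ j ∈ s, x ∈ D j := s.eventually_all.2 fun _ hj => hs hj
  exact hC (hmem.mp (hV (hD s (by lia))))

theorem IsOK.isWeakPPoint [Uncountable κ] {U : Ultrafilter α} (hU : IsOK κ G U) (hUG : ↑U ≤ G) :
    IsWeakPPoint G U := by
  refine ⟨hUG, fun V hV => ?_⟩
  have hsep (n : ℕ) : ∃ C ∈ U, C ∉ V n := by
    by_contra! h
    exact (hV n).2 (Ultrafilter.coe_le_coe.1 h)
  choose C hCU hCV using hsep
  obtain ⟨D, hDU, hDC⟩ := hU C hCU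
  have hcount : (⋃ n, {j | D j ∈ V n}).Countable := countable_iUnion fun n =>
    (finite_setOf_mem_ultrafilter (hV n).1 (hCV n) fun s => hDC s n).countable
  have hne : ⋃ n, {j | D j ∈ V n} ≠ Set.univ := fun h => not_countable_univ (h ▸ hcount)
  obtain ⟨j, hj⟩ := (ne_univ_iff_exists_notMem _).1 hne
  exact ⟨D j, hDU j, by simpa using hj⟩

/-! ### The independent linked family -/

/-- Finite approximations: a point `⟨k, f⟩` assigns to each trace on `{0, …, k - 1}` of a row index
a finite set of traces of member indices. -/
abbrev Approx : Type := Σ k : ℕ, Set (Fin k) → Finset (Set (Fin k))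

/-- The trace of `X` on `{0, …, k - 1}`. -/
def trace (k : ℕ) (X : Set ℕ) : Set (Fin k) := Fin.val ⁻¹' X

/-- Kunen's independent linked family, with rows and their members both indexed by `Set ℕ`: row `Y`
consists of the sets, for varying `X`, of those `⟨k, f⟩` for which `f` assigns to the trace of `Y`
at most `n` candidates, the trace of `X` among them. -/
def approxFamily (Y X : Set ℕ) (n : ℕ) : Set Approx :=
  {x | trace x.1 X ∈ x.2 (trace x.1 Y) ∧ (x.2 (trace x.1 Y)).card ≤ n}

lemma eventually_injOn_trace (s : Finset (Set ℕ)) :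
    ∀ᶠ k in atTop, InjOn (trace k) (s : Set (Set ℕ)) := by
  refine s.eventually_all.2 fun X _ => s.eventually_all.2 fun Y _ => ?_
  by_cases hXY : X = Y
  · simp [hXY]
  · obtain ⟨a, ha⟩ : ∃ a, ¬ (a ∈ X ↔ a ∈ Y) := not_forall.1 fun h => hXY (Set.ext h)
    filter_upwards [eventually_gt_atTop a] with k hk h
    exact absurd (Set.ext_iff.1 h ⟨a, hk⟩) ha

lemma tendsto_sigma_fst_cofinite {β : ℕ → Type*} [∀ k, Finite (β k)] :
    Tendsto (Sigma.fst : (Σ k, β k) → ℕ) cofinite atTop := by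
  rw [← Nat.cofinite_eq_atTop]
  refine Tendsto.cofinite_of_finite_preimage_singleton fun k => ?_
  rw [← range_sigmaMk]
  exact finite_range _

lemma isLinkedFamily_approxFamily : IsLinkedFamily cofinite approxFamily where
  monotone _ _ _ _ hmn _ hx := ⟨hx.1, hx.2.trans hmn⟩
  eventually_exists_notMem Y s n hn := by
    classical
    filter_upwards [tendsto_sigma_fst_cofinite.eventually (eventually_injOn_trace s)]
      with ⟨k, f⟩ hinj
    by_contra! hmem
    obtain ⟨X, hX⟩ : s.Nonempty := Finset.card_pos.1 (n.zero_le.trans_lt hn)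
    have hcard : s.card ≤ n := calc
      s.card = (s.image (trace k)).card := (Finset.card_image_of_injOn hinj).symm
      _ ≤ (f (trace k Y)).card :=
        Finset.card_le_card (Finset.image_subset_iff.2 fun X hX => (hmem X hX).1)
      _ ≤ n := (hmem X hX).2
    exact hcard.not_gt hn

lemma independentOff_approxFamily : IndependentOff approxFamily cofinite ∅ := by
  classical
  intro τ _ σ
  let g (k : ℕ) (a : Set (Fin k)) : Finset (Set (Fin k)) :=
    (σ (Function.invFunOn (trace k) τ a)).image (trace k)
  have hinj : Function.Injective fun k => (⟨k, g k⟩ : Approx) := fun _ _ h => congrArg Sigma.fst h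
  refine hinj.tendsto_cofinite.frequently (Eventually.frequently ?_)
  rw [Nat.cofinite_eq_atTop]
  filter_upwards [eventually_injOn_trace τ] with k hk Y hY X hX
  have hg : g k (trace k Y) = (σ Y).image (trace k) := by
    simp only [g, hk.leftInvOn_invFunOn hY]
  exact ⟨hg.ge (Finset.mem_image_of_mem _ hX),
    (congrArg Finset.card hg).trans_le Finset.card_image_le⟩

instance : Infinite Approx :=
  Infinite.of_injective (fun k => ⟨k, fun _ => ∅⟩) fun _ _ h => congrArg Sigma.fst h

lemma exists_isLinkedFamily_independentOff :
    ∃ A : Set ℕ → Set ℕ → ℕ → Set ℕ, IsLinkedFamily atTop A ∧ IndependentOff A atTop ∅ := by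
  obtain ⟨hApprox⟩ := nonempty_denumerable Approx
  let e := (Denumerable.eqv Approx).symm
  rw [← Nat.cofinite_eq_atTop]
  refine ⟨fun Y X n => e ⁻¹' approxFamily Y X n,
    isLinkedFamily_approxFamily.preimage e.injective.tendsto_cofinite,
    IndependentOff.preimage (independentOff_approxFamily.mono_filter ?_)⟩
  exact (map_comap_of_surjective e.surjective cofinite).ge.trans (map_mono (comap_cofinite_le e))

theorem exists_le_isWeakPPoint [Countable α] {f : α → ℕ} (hfG : Tendsto f G atTop) (hFG : F ≤ G)
    (hfF : atTop ≤ map f F) : ∃ U : Ultrafilter α, ↑U ≤ F ∧ IsWeakPPoint G U := by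
  obtain ⟨A, hA, hind⟩ := exists_isLinkedFamily_independentOff
  obtain ⟨B, hB⟩ := exists_surjective_sequence α
  obtain ⟨U, hUF, hU⟩ := exists_isOK (hfG.mono_left hFG) (hA.preimage hfG)
    (hind.mono_filter hfF).preimage hB
  exact ⟨U, hUF, hU.isWeakPPoint (hUF.trans hFG)⟩

end IndependentLinked

end WeakPPoint

open WeakPPoint

/-- `U` is a weak P-point even of `βℕ \ ℕ`, not only of the Stone space of `𝒫(ℕ)/Δ_d`. -/
theorem exists_weak_P_point_density_general :
    ∃ U : Ultrafilter ℕ, (∀ A ∈ U, ¬ HasDensity A 0) ∧ IsWeakPPoint cofinite U := by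
  obtain ⟨U, hU, hweak⟩ := exists_le_isWeakPPoint tendsto_natLog_two_cofinite
    densityOneFilter_le_cofinite atTop_le_map_log_densityOneFilter
  exact ⟨U, ultrafilter_le_densityOneFilter_iff.1 hU, hweak⟩

/-- Theorem 1: the Stone space of `𝒫(ℕ)/Δ_d` has a weak P-point.  Points of this Stone
space are ultrafilters on `ℕ` containing no set of asymptotic density zero. -/
theorem exists_weak_P_point_density :
    ∃ U : Ultrafilter ℕ,
      (∀ A : Set ℕ, A ∈ U → ¬ HasDensity A 0) ∧
      ∀ V : ℕ → Ultrafilter ℕ,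
        (∀ n : ℕ, (∀ A : Set ℕ, A ∈ V n → ¬ HasDensity A 0) ∧ V n ≠ U) →
        ∃ A ∈ U, ∀ n : ℕ, A ∉ V n := by
  obtain ⟨U, hU, hweak⟩ := exists_weak_P_point_density_general
  exact ⟨U, hU, fun V hV => hweak.2 V fun n =>
    ⟨(ultrafilter_le_densityOneFilter_iff.2 (hV n).1).trans densityOneFilter_le_cofinite, (hV n).2⟩⟩
end

section
/- Let D be a Boolean algebra and let B be a Boolean subalgebra of D such that for every c ∈ D, the ideal {a ∈ B : a ≤ c} of B is countably generated and the filter {b ∈ B : c ≤ b} of B is countably generated. Let C be the Boolean subalgebra of D generated by B together with a countable set S ⊆ D. Then for every c ∈ D, the ideal {a ∈ C : a ≤ c} of C is countably generated and the filter {b ∈ C : c ≤ b} of C is countably generated. -/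
/-- `B` is (the carrier of) a Boolean subalgebra of `D`. -/
def IsBoolSubalgebra {D : Type*} [BooleanAlgebra D] (B : Set D) : Prop :=
  ⊥ ∈ B ∧ ⊤ ∈ B ∧ (∀ a ∈ B, ∀ b ∈ B, a ⊔ b ∈ B) ∧ (∀ a ∈ B, ∀ b ∈ B, a ⊓ b ∈ B) ∧
    ∀ a ∈ B, aᶜ ∈ B

/-- The Boolean subalgebra of `D` generated by a set `X`: the intersection of all
Boolean subalgebras containing `X`. -/
def boolSubalgClosure {D : Type*} [BooleanAlgebra D] (X : Set D) : Set D :=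
  ⋂₀ {B : Set D | IsBoolSubalgebra B ∧ X ⊆ B}

/-- The ideal `{a ∈ B : a ≤ c}` of `B` is countably generated. -/
def CountablyGeneratedIdeal {D : Type*} [BooleanAlgebra D] (B : Set D) (c : D) : Prop :=
  ∃ G : Set D, G.Countable ∧ (∀ g ∈ G, g ∈ B ∧ g ≤ c) ∧
    ∀ a ∈ B, a ≤ c → ∃ t : Finset D, ↑t ⊆ G ∧ a ≤ t.sup id

/-- The filter `{b ∈ B : c ≤ b}` of `B` is countably generated. -/
def CountablyGeneratedFilter {D : Type*} [BooleanAlgebra D] (B : Set D) (c : D) : Prop :=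
  ∃ G : Set D, G.Countable ∧ (∀ g ∈ G, g ∈ B ∧ c ≤ g) ∧
    ∀ b ∈ B, c ≤ b → ∃ t : Finset D, ↑t ⊆ G ∧ t.inf id ≤ b

/-!
By De Morgan and distributivity, closing `B`, `S` and the complements of elements of `S` under
finite meets and then under finite joins gives the generated Boolean subalgebra. Hence each of its
elements is a finite join of elements `b ⊓ t`, where `b ∈ B` and `t` ranges over the countable set
`T` of finite meets of elements of `S` and their complements. Since `b ⊓ t ≤ c` if and only if
`b ≤ t ⇨ c`, the ideal below `c` is generated by the elements `g ⊓ t`, where `t ∈ T` and `g` runs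
over countably many generators of the ideal of `B` below `t ⇨ c`. Complementation turns ideals
into filters.
-/

section Semilattice

open scoped SetFamily

variable {α : Type*} [SemilatticeInf α] {s t : Set α}

lemma countable_infClosure (hs : s.Countable) : (infClosure s).Countable := by
  have finsets_countable : {u : Finset α | (u : Set α) ⊆ s}.Countable := by
    refine Set.Countable.mono (fun u hu ↦ ?_)
      ((Set.countable_ofPred_finite_subset hs).preimage_of_injOn Finset.coe_injective.injOn)
    exact ⟨u.finite_toSet, hu⟩
  refine (finsets_countable.biUnion (t := fun u _ ↦ {a | ∃ hu : u.Nonempty, u.inf' hu id = a})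
    fun u _ ↦ Set.Subsingleton.countable ?_).mono ?_
  · rintro _ ⟨_, rfl⟩ _ ⟨_, rfl⟩
    rfl
  · rintro a ⟨u, hu, hus, hua⟩
    exact Set.mem_biUnion hus ⟨hu, hua⟩

lemma infClosed_infs (hs : InfClosed s) (ht : InfClosed t) : InfClosed (s ⊼ t) := by
  rw [← Set.infs_self_subset, Set.infs_infs_infs_comm]
  exact Set.infs_subset (Set.infs_self_subset.2 hs) (Set.infs_self_subset.2 ht)

lemma infClosure_union_eq_infs [OrderTop α] (hs : InfClosed s) (htop : ⊤ ∈ s) (t : Set α) :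
    infClosure (s ∪ t) = s ⊼ infClosure (insert ⊤ t) := by
  apply Set.Subset.antisymm
  · refine infClosure_min (Set.union_subset ?_ ?_) (infClosed_infs hs infClosed_infClosure)
    · intro a ha
      simpa using Set.inf_mem_infs ha (subset_infClosure (Set.mem_insert ⊤ t))
    · intro a ha
      simpa using Set.inf_mem_infs htop (subset_infClosure (Set.mem_insert_of_mem ⊤ ha))
  · have insert_subset : insert ⊤ t ⊆ s ∪ t :=
      Set.insert_subset (.inl htop) Set.subset_union_right
    exact Set.infs_subset_iff.2 fun a ha b hb ↦
      infClosed_infClosure (subset_infClosure (.inl ha)) (infClosure_mono insert_subset hb)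

end Semilattice

section BooleanSubalgebra

open scoped SetFamily

variable {D : Type*} [BooleanAlgebra D] {A B X : Set D}

lemma IsBoolSubalgebra.isSublattice (hB : IsBoolSubalgebra B) : IsSublattice B :=
  ⟨fun _ ha _ hb ↦ hB.2.2.1 _ ha _ hb, fun _ ha _ hb ↦ hB.2.2.2.1 _ ha _ hb⟩

lemma IsBoolSubalgebra.compl_mem (hB : IsBoolSubalgebra B) {a : D} (ha : a ∈ B) : aᶜ ∈ B :=
  hB.2.2.2.2 a ha

lemma isBoolSubalgebra_boolSubalgClosure (X : Set D) : IsBoolSubalgebra (boolSubalgClosure X) :=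
  ⟨fun _ hA ↦ hA.1.1, fun _ hA ↦ hA.1.2.1,
    fun _ ha _ hb A hA ↦ hA.1.2.2.1 _ (ha A hA) _ (hb A hA),
    fun _ ha _ hb A hA ↦ hA.1.2.2.2.1 _ (ha A hA) _ (hb A hA),
    fun _ ha A hA ↦ hA.1.compl_mem (ha A hA)⟩

lemma subset_boolSubalgClosure : X ⊆ boolSubalgClosure X :=
  fun _ hx _ hA ↦ hA.2 hx

lemma boolSubalgClosure_min (hXA : X ⊆ A) (hA : IsBoolSubalgebra A) : boolSubalgClosure X ⊆ A :=
  fun _ hx ↦ hx A ⟨hA, hXA⟩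

lemma isBoolSubalgebra_latticeClosure (hbot : ⊥ ∈ X) (hcompl : compl '' X = X) :
    IsBoolSubalgebra (latticeClosure X) := by
  have compl_mem : ∀ a ∈ latticeClosure X, aᶜ ∈ latticeClosure X := fun a ha ↦
    compl_image_latticeClosure_eq_of_compl_image_eq_self hcompl ▸ Set.mem_image_of_mem compl ha
  have bot_mem : ⊥ ∈ latticeClosure X := subset_latticeClosure hbot
  exact ⟨bot_mem, compl_bot (α := D) ▸ compl_mem ⊥ bot_mem,
    fun _ ha _ hb ↦ isSublattice_latticeClosure.supClosed ha hb,
    fun _ ha _ hb ↦ isSublattice_latticeClosure.infClosed ha hb, compl_mem⟩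

lemma boolSubalgClosure_eq_latticeClosure (hbot : ⊥ ∈ X) :
    boolSubalgClosure X = latticeClosure (X ∪ compl '' X) := by
  have compl_union : compl '' (X ∪ compl '' X) = X ∪ compl '' X := by
    rw [Set.image_union, Set.image_image, Set.union_comm]
    simp only [compl_compl, Set.image_id']
  have closure_isBoolSubalgebra := isBoolSubalgebra_boolSubalgClosure X
  apply Set.Subset.antisymm
  · exact boolSubalgClosure_min (Set.subset_union_left.trans subset_latticeClosure)
      (isBoolSubalgebra_latticeClosure (.inl hbot) compl_union)
  · refine latticeClosure_min (Set.union_subset subset_boolSubalgClosure ?_)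
      closure_isBoolSubalgebra.isSublattice
    exact Set.image_subset_iff.2 fun _ ha ↦
      closure_isBoolSubalgebra.compl_mem (subset_boolSubalgClosure ha)

lemma IsBoolSubalgebra.boolSubalgClosure_union (hB : IsBoolSubalgebra B) (S : Set D) :
    boolSubalgClosure (B ∪ S) =
      supClosure (B ⊼ infClosure (insert ⊤ (S ∪ compl '' S))) := by
  have compl_subset : compl '' B ⊆ B := Set.image_subset_iff.2 fun _ ↦ hB.compl_mem
  have union_compl : B ∪ S ∪ compl '' (B ∪ S) = B ∪ (S ∪ compl '' S) := by
    rw [Set.image_union, Set.union_union_union_comm, Set.union_eq_left.2 compl_subset]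
  rw [boolSubalgClosure_eq_latticeClosure (.inl hB.1), union_compl, ← supClosure_infClosure,
    infClosure_union_eq_infs hB.isSublattice.infClosed hB.2.1]

end BooleanSubalgebra

namespace CountablyGeneratedIdeal

open scoped SetFamily

variable {D : Type*} [BooleanAlgebra D] {B T : Set D} {c : D}

protected lemma supClosure (hB : CountablyGeneratedIdeal B c) :
    CountablyGeneratedIdeal (supClosure B) c := by
  classical
  obtain ⟨G, hG, hGB, hgen⟩ := hB
  have supClosed_covered : SupClosed
      {a | a ≤ c → ∃ u : Finset D, (u : Set D) ⊆ G ∧ a ≤ u.sup id} := by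
    intro a ha b hb hab
    obtain ⟨u, hu, hau⟩ := ha (le_sup_left.trans hab)
    obtain ⟨v, hv, hbv⟩ := hb (le_sup_right.trans hab)
    refine ⟨u ∪ v, ?_, ?_⟩
    · simpa only [Finset.coe_union] using Set.union_subset hu hv
    · simpa only [Finset.sup_union] using sup_le_sup hau hbv
  exact ⟨G, hG, fun g hg ↦ ⟨subset_supClosure (hGB g hg).1, (hGB g hg).2⟩,
    supClosure_min hgen supClosed_covered⟩

protected lemma infs (hT : T.Countable) (hB : ∀ t ∈ T, CountablyGeneratedIdeal B (t ⇨ c)) :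
    CountablyGeneratedIdeal (B ⊼ T) c := by
  classical
  choose! G hG hGB hgen using hB
  refine ⟨⋃ t ∈ T, (· ⊓ t) '' G t, hT.biUnion fun t ht ↦ (hG t ht).image _, ?_, ?_⟩
  · simp only [Set.mem_iUnion]
    rintro _ ⟨t, ht, g, hg, rfl⟩
    obtain ⟨g_mem, g_le⟩ := hGB t ht g hg
    exact ⟨Set.inf_mem_infs g_mem ht, le_himp_iff.1 g_le⟩
  · rw [Set.forall_infs_iff]
    intro b hb t ht hbt
    obtain ⟨u, hu, hbu⟩ := hgen t ht b hb (le_himp_iff.2 hbt)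
    refine ⟨u.image (· ⊓ t), ?_, ?_⟩
    · rw [Finset.coe_image]
      exact (Set.image_mono hu).trans
        (Set.subset_biUnion_of_mem (u := fun t ↦ (· ⊓ t) '' G t) ht)
    · calc
        b ⊓ t ≤ u.sup id ⊓ t := inf_le_inf_right t hbu
        _ = (u.image (· ⊓ t)).sup id := by
          rw [Finset.sup_inf_distrib_right, Finset.sup_image]
          rfl

lemma countablyGeneratedFilter_of_compl (hB : ∀ a ∈ B, aᶜ ∈ B) (hc : CountablyGeneratedIdeal B cᶜ) :
    CountablyGeneratedFilter B c := by
  classical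
  obtain ⟨G, hG, hGB, hgen⟩ := hc
  refine ⟨compl '' G, hG.image _, ?_, fun b hb hcb ↦ ?_⟩
  · rintro _ ⟨g, hg, rfl⟩
    exact ⟨hB g (hGB g hg).1, le_compl_comm.1 (hGB g hg).2⟩
  · obtain ⟨u, hu, hbu⟩ := hgen bᶜ (hB b hb) (compl_le_compl hcb)
    refine ⟨u.image compl, by simpa only [Finset.coe_image] using Set.image_mono hu, ?_⟩
    calc
      (u.image compl).inf id = (u.sup id)ᶜ := by
        rw [Finset.inf_image, Finset.compl_sup]
        rfl
      _ ≤ b := compl_le_of_compl_le hbu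

end CountablyGeneratedIdeal

/-- Lemma 6: if every `c ∈ D` determines a countably generated gap over the Boolean
subalgebra `B`, then every `c ∈ D` determines a countably generated gap over the
subalgebra generated by `B` together with a countable set `S`. -/
theorem countably_generated_gap_extension
    {D : Type*} [BooleanAlgebra D] (B : Set D) (hB : IsBoolSubalgebra B)
    (S : Set D) (hS : S.Countable)
    (hgap : ∀ c : D, CountablyGeneratedIdeal B c ∧ CountablyGeneratedFilter B c) :
    ∀ c : D, CountablyGeneratedIdeal (boolSubalgClosure (B ∪ S)) c ∧
      CountablyGeneratedFilter (boolSubalgClosure (B ∪ S)) c := by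
  have literals_countable : (insert ⊤ (S ∪ compl '' S)).Countable :=
    (hS.union (hS.image compl)).insert ⊤
  have ideal (c : D) : CountablyGeneratedIdeal (boolSubalgClosure (B ∪ S)) c := by
    rw [hB.boolSubalgClosure_union S]
    exact .supClosure (.infs (countable_infClosure literals_countable) fun t _ ↦ (hgap (t ⇨ c)).1)
  exact fun c ↦ ⟨ideal c, (ideal cᶜ).countablyGeneratedFilter_of_compl fun _ ↦
    (isBoolSubalgebra_boolSubalgClosure (B ∪ S)).compl_mem⟩
end

section
/- There exists a family (A_i)_{i ∈ I} of subsets of ℕ indexed by a set I of cardinality continuum (e.g., I = 𝒫(ℕ)) such that for every finite subset s ⊆ I and every function ε : s → {0,1}, the Boolean combination ⋂_{i∈s} A_i^{ε(i)} has asymptotic density exactly 2^{−|s|}, where A^0 = A and A^1 = ℕ∖A. In particular each A_i has asymptotic density 1/2 and the family is independent. -/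
open Filter Topology MeasureTheory
open scoped symmDiff

/-!
Let `c_X l ≤ l / 2` code the set `X` at level `l`, so that the codes of two distinct sets differ at
all large levels, and put `n ∈ A_X` when bit number `c_X ⌊log₂ n⌋` of `n` is set. Flipping that bit
is an involution which moves `n` by at most `√n`. It exchanges `A_X` with its complement and, for
large `n`, does not change membership in `A_Y` for `Y ≠ X`, since it leaves `⌊log₂ n⌋` alone. Hence
`A_X` cuts each Boolean combination of finitely many other `A_Y` into two pieces of equal density.
-/

open Asymptotics

section Density

variable {A B S T : Set ℕ} {φ e : ℕ → ℕ} {p : ℝ}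

theorem hasDensity_univ : HasDensity Set.univ 1 := by
  refine tendsto_const_nhds.congr' ?_
  filter_upwards [eventually_ne_atTop 0] with n hn
  rw [Set.univ_inter, Set.ncard_Iio_nat, div_self (Nat.cast_ne_zero.mpr hn)]

theorem HasDensity.inter_of_isLittleO (hS : HasDensity S p)
    (h : (fun n : ℕ ↦ ((S ∩ T ∩ Set.Iio n).ncard : ℝ) - (S \ T ∩ Set.Iio n).ncard)
      =o[atTop] fun n : ℕ ↦ (n : ℝ)) :
    HasDensity (S ∩ T) (p / 2) := by
  have hlim := (h.tendsto_div_nhds_zero.add hS).div_const 2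
  rw [zero_add] at hlim
  refine hlim.congr fun n ↦ ?_
  have hsplit : ((S ∩ T ∩ Set.Iio n).ncard : ℝ) + (S \ T ∩ Set.Iio n).ncard
      = (S ∩ Set.Iio n).ncard := by
    rw [Set.inter_right_comm, ← Set.inter_sdiff_right_comm]
    exact_mod_cast Set.ncard_inter_add_ncard_sdiff_eq_ncard (S ∩ Set.Iio n) T
      ((Set.finite_Iio n).inter_of_right S)
  rw [← hsplit]
  ring

theorem ncard_inter_Iio_le_of_mapsTo (hφ : Set.InjOn φ A) (hAB : Set.MapsTo φ A B)
    (he : Monotone e) (hle : ∀ n ∈ A, φ n ≤ n + e n) (N : ℕ) :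
    (A ∩ Set.Iio N).ncard ≤ (B ∩ Set.Iio N).ncard + e N := by
  have hmaps : ∀ n ∈ A ∩ Set.Iio N, φ n ∈ (B ∩ Set.Iio N) ∪ Set.Ico N (N + e N) := by
    rintro n ⟨hnA, hnN : n < N⟩
    rcases lt_or_ge (φ n) N with hlt | hge
    · exact Or.inl ⟨hAB hnA, hlt⟩
    · exact Or.inr ⟨hge, (hle n hnA).trans_lt (add_lt_add_of_lt_of_le hnN (he hnN.le))⟩
  calc (A ∩ Set.Iio N).ncard
      ≤ ((B ∩ Set.Iio N) ∪ Set.Ico N (N + e N)).ncard :=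
        Set.ncard_le_ncard_of_injOn φ hmaps (hφ.mono Set.inter_subset_left)
          (((Set.finite_Iio N).inter_of_right B).union (Set.finite_Ico _ _))
    _ ≤ (B ∩ Set.Iio N).ncard + (Set.Ico N (N + e N)).ncard := Set.ncard_union_le _ _
    _ = (B ∩ Set.Iio N).ncard + e N := by rw [Set.ncard_Ico_nat, Nat.add_sub_cancel_left]

theorem exists_ncard_inter_Iio_le_of_eventually_mapsTo (hφ : Function.Injective φ)
    (hAB : ∀ᶠ n in atTop, n ∈ A → φ n ∈ B) (he : Monotone e)
    (hle : ∀ᶠ n in atTop, φ n ≤ n + e n) :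
    ∃ C : ℕ, ∀ N, (A ∩ Set.Iio N).ncard ≤ (B ∩ Set.Iio N).ncard + (e N + C) := by
  obtain ⟨C, hC⟩ := eventually_atTop.mp (hAB.and hle)
  refine ⟨C, fun N ↦ ?_⟩
  have hcover : A ∩ Set.Iio N ⊆ (A ∩ Set.Ici C ∩ Set.Iio N) ∪ Set.Iio C := by
    rintro n ⟨hnA, hnN⟩
    exact (le_or_gt C n).imp (fun hCn ↦ ⟨⟨hnA, hCn⟩, hnN⟩) id
  calc (A ∩ Set.Iio N).ncard
      ≤ ((A ∩ Set.Ici C ∩ Set.Iio N) ∪ Set.Iio C).ncard :=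
        Set.ncard_le_ncard hcover (((Set.finite_Iio N).inter_of_right _).union (Set.finite_Iio C))
    _ ≤ (A ∩ Set.Ici C ∩ Set.Iio N).ncard + (Set.Iio C).ncard := Set.ncard_union_le _ _
    _ ≤ (B ∩ Set.Iio N).ncard + e N + C := by
        rw [Set.ncard_Iio_nat]
        gcongr
        exact ncard_inter_Iio_le_of_mapsTo hφ.injOn (fun n hn ↦ (hC n hn.2).1 hn.1) he
          (fun n hn ↦ (hC n hn.2).2) N
    _ = (B ∩ Set.Iio N).ncard + (e N + C) := add_assoc _ _ _

theorem isLittleO_ncard_inter_Iio_sub (hφ : Function.Injective φ)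
    (hAB : ∀ᶠ n in atTop, n ∈ A → φ n ∈ B) (hBA : ∀ᶠ n in atTop, n ∈ B → φ n ∈ A)
    (he : Monotone e) (hle : ∀ᶠ n in atTop, φ n ≤ n + e n)
    (heo : (fun n ↦ (e n : ℝ)) =o[atTop] fun n : ℕ ↦ (n : ℝ)) :
    (fun n : ℕ ↦ ((A ∩ Set.Iio n).ncard : ℝ) - (B ∩ Set.Iio n).ncard)
      =o[atTop] fun n : ℕ ↦ (n : ℝ) := by
  obtain ⟨C, hC⟩ := exists_ncard_inter_Iio_le_of_eventually_mapsTo hφ hAB he hle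
  obtain ⟨D, hD⟩ := exists_ncard_inter_Iio_le_of_eventually_mapsTo hφ hBA he hle
  have herr : (fun n ↦ (e n : ℝ) + (C + D : ℕ)) =o[atTop] fun n : ℕ ↦ (n : ℝ) :=
    heo.add ((isLittleO_const_id_atTop _).comp_tendsto tendsto_natCast_atTop_atTop)
  refine (IsBigO.of_bound' (Eventually.of_forall fun n ↦ ?_)).trans_isLittleO herr
  have hAn : ((A ∩ Set.Iio n).ncard : ℝ) ≤ (B ∩ Set.Iio n).ncard + (e n + C) := mod_cast hC n
  have hBn : ((B ∩ Set.Iio n).ncard : ℝ) ≤ (A ∩ Set.Iio n).ncard + (e n + D) := mod_cast hD n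
  rw [Real.norm_eq_abs, Real.norm_of_nonneg (by positivity), abs_le, Nat.cast_add]
  constructor <;> linarith [C.cast_nonneg (α := ℝ), D.cast_nonneg (α := ℝ)]

theorem HasDensity.inter_of_injective (hS : HasDensity S p) (hφ : Function.Injective φ)
    (hφS : ∀ᶠ n in atTop, φ n ∈ S ↔ n ∈ S) (hφT : ∀ᶠ n in atTop, φ n ∈ T ↔ n ∉ T)
    (he : Monotone e) (hle : ∀ᶠ n in atTop, φ n ≤ n + e n)
    (heo : (fun n ↦ (e n : ℝ)) =o[atTop] fun n : ℕ ↦ (n : ℝ)) :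
    HasDensity (S ∩ T) (p / 2) := by
  refine hS.inter_of_isLittleO (isLittleO_ncard_inter_Iio_sub hφ ?_ ?_ he hle heo)
  · filter_upwards [hφS, hφT] with n hnS hnT hn
    exact ⟨hnS.mpr hn.1, fun h ↦ hnT.mp h hn.2⟩
  · filter_upwards [hφS, hφT] with n hnS hnT hn
    exact ⟨hnS.mpr hn.1, hnT.mpr hn.2⟩

end Density

section NatFunctions

theorem isLittleO_natSqrt :
    (fun n : ℕ ↦ (Nat.sqrt n : ℝ)) =o[atTop] fun n : ℕ ↦ (n : ℝ) := by
  refine isLittleO_of_tendsto (fun n hn ↦ by simp [Nat.cast_eq_zero.mp hn]) ?_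
  refine squeeze_zero (fun n ↦ by positivity) (fun n ↦ ?_)
    (tendsto_inv_atTop_zero.comp (Real.tendsto_sqrt_atTop.comp tendsto_natCast_atTop_atTop))
  calc (Nat.sqrt n : ℝ) / n ≤ √n / n := by gcongr; exact Real.nat_sqrt_le_real_sqrt
    _ = (√n)⁻¹ := Real.sqrt_div_self

theorem tendsto_natLog_atTop {b : ℕ} (hb : 1 < b) : Tendsto (Nat.log b) atTop atTop :=
  tendsto_atTop_atTop_of_monotone Nat.log_monotone fun l ↦ ⟨b ^ l, (Nat.log_pow hb l).ge⟩

theorem xor_le_add (a b : ℕ) : a ^^^ b ≤ a + b := by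
  induction a using Nat.strong_induction_on generalizing b with
  | _ a ih =>
    rcases Nat.eq_zero_or_pos a with rfl | ha
    · simp
    · have hhalves : a / 2 ^^^ b / 2 ≤ a / 2 + b / 2 := ih (a / 2) (by omega) (b / 2)
      have hdiv : (a ^^^ b) / 2 = a / 2 ^^^ b / 2 := Nat.xor_div_two
      have hmod : (a ^^^ b) % 2 = (a + b) % 2 := Nat.xor_mod_two_eq
      omega

theorem log_two_xor_of_lt {a b : ℕ} (hb : b < 2 ^ Nat.log 2 a) :
    Nat.log 2 (a ^^^ b) = Nat.log 2 a := by
  rcases eq_or_ne a 0 with rfl | ha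
  · simp_all
  refine Nat.log_eq_of_pow_le_of_lt_pow ?_ ?_
  · have hdiv : (a ^^^ b) / 2 ^ Nat.log 2 a = a / 2 ^ Nat.log 2 a := by
      rw [Nat.xor_div_two_pow, Nat.div_eq_of_lt hb, Nat.xor_zero]
    refine (Nat.div_pos_iff.mp ?_).2
    rw [hdiv]
    exact Nat.div_pos (Nat.pow_log_le_self 2 ha) (by positivity)
  · exact Nat.xor_lt_two_pow (Nat.lt_pow_succ_log_self one_lt_two a)
      (hb.trans (Nat.pow_lt_pow_succ one_lt_two))

end NatFunctions

/-- The numbers `n` whose bit number `c l` is set, where `l = ⌊log₂ n⌋` is the position of the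
leading bit of `n`. -/
def selectedBitSet (c : ℕ → ℕ) : Set ℕ := {n | n.testBit (c (Nat.log 2 n))}

/-- Flips the bit of `n` which decides whether `n` belongs to `selectedBitSet c`. -/
def flipSelectedBit (c : ℕ → ℕ) (n : ℕ) : ℕ := n ^^^ 2 ^ c (Nat.log 2 n)

section SelectedBit

variable {c : ℕ → ℕ}

theorem log_flipSelectedBit (hc : ∀ l, 2 * c l ≤ l) (n : ℕ) :
    Nat.log 2 (flipSelectedBit c n) = Nat.log 2 n := by
  rcases Nat.eq_zero_or_pos (Nat.log 2 n) with hlog | hlog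
  · have hc0 : c 0 = 0 := by simpa using hc 0
    have hn : n < 2 := by simpa [Nat.log_eq_zero_iff] using hlog
    interval_cases n <;> simp [flipSelectedBit, hc0]
  · refine log_two_xor_of_lt (Nat.pow_lt_pow_right one_lt_two ?_)
    linarith [hc (Nat.log 2 n)]

theorem flipSelectedBit_involutive (hc : ∀ l, 2 * c l ≤ l) :
    Function.Involutive (flipSelectedBit c) := fun n ↦ by
  rw [flipSelectedBit, log_flipSelectedBit hc, flipSelectedBit, Nat.xor_assoc, Nat.xor_self,
    Nat.xor_zero]

theorem flipSelectedBit_le_add_sqrt (hc : ∀ l, 2 * c l ≤ l) {n : ℕ} (hn : n ≠ 0) :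
    flipSelectedBit c n ≤ n + Nat.sqrt n := by
  have hpow : 2 ^ c (Nat.log 2 n) ≤ Nat.sqrt n := by
    rw [Nat.le_sqrt, ← pow_add, ← two_mul]
    exact (Nat.pow_le_pow_right two_pos (hc _)).trans (Nat.pow_log_le_self 2 hn)
  exact (xor_le_add _ _).trans (Nat.add_le_add_left hpow n)

theorem flipSelectedBit_mem_selectedBitSet_iff_notMem (hc : ∀ l, 2 * c l ≤ l) (n : ℕ) :
    flipSelectedBit c n ∈ selectedBitSet c ↔ n ∉ selectedBitSet c := by
  simp only [selectedBitSet, Set.mem_ofPred_eq, log_flipSelectedBit hc]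
  simp [flipSelectedBit]

theorem eventually_flipSelectedBit_mem_selectedBitSet_iff {d : ℕ → ℕ} (hc : ∀ l, 2 * c l ≤ l)
    (hcd : ∀ᶠ l in atTop, c l ≠ d l) :
    ∀ᶠ n in atTop, flipSelectedBit c n ∈ selectedBitSet d ↔ n ∈ selectedBitSet d := by
  filter_upwards [(tendsto_natLog_atTop one_lt_two).eventually hcd] with n hn
  simp only [selectedBitSet, Set.mem_ofPred_eq, log_flipSelectedBit hc]
  simp [flipSelectedBit, Nat.testBit_two_pow_of_ne hn]

theorem hasDensity_biInter_selectedBitSet {ι : Type*} {c : ι → ℕ → ℕ}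
    (hc : ∀ i l, 2 * c i l ≤ l) (hne : Pairwise fun i j ↦ ∀ᶠ l in atTop, c i l ≠ c j l)
    (s : Finset ι) (ε : ι → Bool) :
    HasDensity (⋂ i ∈ s, if ε i then (selectedBitSet (c i))ᶜ else selectedBitSet (c i))
      ((2 : ℝ)⁻¹ ^ s.card) := by
  classical
  induction s using Finset.induction_on with
  | empty => simpa using hasDensity_univ
  | insert i s hi ih =>
    have hflip_self : ∀ᶠ n in atTop,
        (flipSelectedBit (c i) n ∈
            if ε i then (selectedBitSet (c i))ᶜ else selectedBitSet (c i)) ↔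
          n ∉ if ε i then (selectedBitSet (c i))ᶜ else selectedBitSet (c i) :=
      Eventually.of_forall fun n ↦ by
        split <;> simp [flipSelectedBit_mem_selectedBitSet_iff_notMem (hc i)]
    have hflip_others : ∀ᶠ n in atTop, ∀ j ∈ s,
        (flipSelectedBit (c i) n ∈ selectedBitSet (c j) ↔ n ∈ selectedBitSet (c j)) :=
      (eventually_all_finset s).mpr fun j hj ↦
        eventually_flipSelectedBit_mem_selectedBitSet_iff (hc i)
          (hne (ne_of_mem_of_not_mem hj hi).symm)
    rw [Finset.set_biInter_insert, Set.inter_comm, Finset.card_insert_of_notMem hi, pow_succ,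
      ← div_eq_mul_inv]
    refine ih.inter_of_injective (flipSelectedBit_involutive (hc i)).injective ?_ hflip_self
      (fun _ _ ↦ Nat.sqrt_le_sqrt)
      ((eventually_ne_atTop 0).mono fun n ↦ flipSelectedBit_le_add_sqrt (hc i)) isLittleO_natSqrt
    filter_upwards [hflip_others] with n hn
    simp only [Set.mem_iInter]
    refine forall₂_congr fun j hj ↦ ?_
    split
    · exact not_congr (hn j hj)
    · exact hn j hj

end SelectedBit

open Classical in
/-- The number whose binary digits are the first `m` values of the indicator function of `X`. It
codes `X ∩ {0, …, m - 1}`. -/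
noncomputable def initialCode (X : Set ℕ) (m : ℕ) : ℕ :=
  ∑ i ∈ Finset.range m with i ∈ X, 2 ^ i

theorem initialCode_lt_two_pow (X : Set ℕ) (m : ℕ) : initialCode X m < 2 ^ m := by
  classical exact Nat.geomSum_lt le_rfl fun _ hk ↦
    Finset.mem_range.mp (Finset.mem_filter.mp hk).1

theorem eventually_initialCode_ne {X Y : Set ℕ} (hXY : X ≠ Y) :
    ∀ᶠ m in atTop, initialCode X m ≠ initialCode Y m := by
  classical
  obtain ⟨x, hx⟩ : ∃ x, ¬(x ∈ X ↔ x ∈ Y) := by simpa [Set.ext_iff] using hXY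
  filter_upwards [eventually_gt_atTop x] with m hm heq
  have hfilter := Finset.ext_iff.mp (Finset.geomSum_injective le_rfl heq) x
  exact hx (by simpa [hm] using hfilter)

theorem exists_pairwise_eventually_ne_family : ∃ c : Set ℕ → ℕ → ℕ,
    (∀ X l, 2 * c X l ≤ l) ∧ Pairwise fun X Y ↦ ∀ᶠ l in atTop, c X l ≠ c Y l := by
  refine ⟨fun X l ↦ initialCode X (Nat.log 2 (l / 2)), fun X l ↦ ?_, fun X Y hXY ↦ ?_⟩
  · rcases eq_or_ne (l / 2) 0 with hl | hl
    · simp [hl, initialCode]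
    · calc 2 * initialCode X (Nat.log 2 (l / 2)) ≤ 2 * 2 ^ Nat.log 2 (l / 2) := by
            gcongr
            exact (initialCode_lt_two_pow X _).le
        _ ≤ 2 * (l / 2) := by gcongr; exact Nat.pow_log_le_self 2 hl
        _ ≤ l := Nat.mul_div_le l 2
  · exact ((tendsto_natLog_atTop one_lt_two).comp
      (Nat.tendsto_div_const_atTop two_ne_zero)).eventually (eventually_initialCode_ne hXY)

/-- Lemma 9: there is an independent family of subsets of `ℕ`, indexed by `𝒫(ℕ)`
(a set of cardinality continuum), all of whose finite Boolean combinations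
`⋂_{i∈s} A_i^{ε(i)}` have asymptotic density exactly `2^{-|s|}`.  (Here `A^0 = A` and
`A^1 = ℕ∖A`; in particular each `A_i` has density `1/2`, each combination is nonempty,
and the family is independent.) -/
theorem exists_independent_family_exact_density :
    ∃ A : Set ℕ → Set ℕ,
      ∀ (s : Finset (Set ℕ)) (ε : Set ℕ → Bool),
        HasDensity (⋂ i ∈ s, if ε i then (A i)ᶜ else A i) ((2 : ℝ)⁻¹ ^ s.card) := by
  obtain ⟨c, hc, hne⟩ := exists_pairwise_eventually_ne_family
  exact ⟨fun X ↦ selectedBitSet (c X), hasDensity_biInter_selectedBitSet hc hne⟩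
end
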